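/- Upper bound for shuffled equality (Lemma peq1): Let k be a multiple of 4 with 4 ≤ k ≤ min(n, 2^{n/4}). Then the Boolean function EQS_k : {0,1}^n → {0,1} is computed by a deterministic k-OBDD of width at most k² + 6k + 2 whose order is the natural order (the identity permutation). -/

import Mathlib

/-- The variable index read at level `m` of a `k`-layer ordered BDD with order `θ`. -/
def varIdx {n : ℕ} (k : ℕ) (θ : Equiv.Perm (Fin n)) (m : Fin (k * n)) : Fin n :=
  θ ⟨m.val % n, Nat.mod_lt _ (Nat.pos_of_ne_zero (fun h => absurd m.isLt (by subst h; simp)))⟩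

/-- A deterministic ordered read-`k`-times branching program (`k`-OBDD) of width `w`
over `n` Boolean variables. -/
structure KOBDD (n k w : ℕ) where
  order : Equiv.Perm (Fin n)
  trans : Fin (k * n) → Fin w → Bool → Fin w
  start : Fin w
  accept : Fin w → Prop

/-- The node reached by the unique computation path of the `k`-OBDD `P` on input `ν`
after `m` levels. -/
def KOBDD.run {n k w : ℕ} (P : KOBDD n k w) (ν : Fin n → Bool) : ℕ → Fin w
  | 0 => P.start
  | m + 1 =>
    if h : m < k * n then
      P.trans ⟨m, h⟩ (P.run ν m) (ν (varIdx k P.order ⟨m, h⟩))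
    else P.run ν m

/-- The `k`-OBDD `P` computes `f`. -/
def KOBDD.Computes {n k w : ℕ} (P : KOBDD n k w) (f : (Fin n → Bool) → Bool) : Prop :=
  ∀ ν : Fin n → Bool, (f ν = true ↔ P.accept (P.run ν (k * n)))

/-- The `j`-th bit (0-based) of an input `ν ∈ {0,1}^n`, or `false` if out of range. -/
def bitOf {n : ℕ} (ν : Fin n → Bool) (j : ℕ) : Bool :=
  if h : j < n then ν ⟨j, h⟩ else false

/-- The string of value bits (bits at 1-based even positions `2i`) whose corresponding
marker bit (at 1-based odd position `2i-1`) equals `mark`, for `1 ≤ i ≤ d/2`, in order. -/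
def eqsPart {n : ℕ} (d : ℕ) (mark : Bool) (ν : Fin n → Bool) : List Bool :=
  ((List.range (d / 2)).filter (fun i => bitOf ν (2 * i) == mark)).map
    (fun i => bitOf ν (2 * i + 1))

/-- The shuffled equality function `EQS_d : {0,1}^n → {0,1}`: the value is `1` iff the string
`α(ν)` of value bits with marker `0` equals the string `β(ν)` of value bits with marker `1`. -/
def EQS (n d : ℕ) (ν : Fin n → Bool) : Bool :=
  decide (eqsPart d false ν = eqsPart d true ν)

/-!
Write `α` and `β` for the two shuffled strings; together they have `d / 2` letters. Hence `α = β`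
as soon as `α[j]? = β[j]?` for all `j < r`, where `d ≤ 4 * r`: if the lengths differ, the shorter
string ends before position `r`. Two passes decide one such equation: pass `2 * j` stores `α[j]?`
and pass `2 * j + 1` compares it with `β[j]?`. A pass locates the letter it wants by counting down
the letters with the right marker, so a node has to remember only that counter, the last marker
bit, and the stored letter or the fact that some comparison has failed. This gives `2 * r` passes
over the input and width `8 * (r + 1)`.
-/

/-- An automaton that reads its input `ν` from left to right several times: `enter p` acts on the
state at the beginning of pass `p`, and `read p q` consumes the bit `ν_q` (0-based) in pass `p`.
With finitely many states it is an OBDD whose order is the natural one. -/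
structure PassMachine (σ : Type*) where
  init : σ
  enter : ℕ → σ → σ
  read : ℕ → ℕ → σ → Bool → σ
  accept : σ → Prop

namespace PassMachine

variable {σ : Type*} {n k w : ℕ}

/-- The state after the first `q` bits of pass `p`, if the pass is begun in state `s`. -/
def scan (M : PassMachine σ) (ν : Fin n → Bool) (p : ℕ) (s : σ) : ℕ → σ
  | 0 => M.enter p s
  | q + 1 => M.read p q (M.scan ν p s q) (bitOf ν q)

/-- The state after the first `p` passes. -/
def afterPasses (M : PassMachine σ) (ν : Fin n → Bool) : ℕ → σ
  | 0 => M.init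
  | p + 1 => M.scan ν p (M.afterPasses ν p) n

/-- The `k`-OBDD that simulates `k` passes, with states represented by nodes through `e`. There is
no level between two passes, so `enter` is merged into the reading of the first bit. -/
noncomputable def toKOBDD [Nonempty σ] (M : PassMachine σ) (n k : ℕ) (e : σ ↪ Fin w) :
    KOBDD n k w where
  order := Equiv.refl (Fin n)
  trans m v b :=
    let s := Function.invFun e v
    let p := m.val / n
    let q := m.val % n
    e (M.read p q (if q = 0 then M.enter p s else s) b)
  start := e M.init
  accept v := M.accept (Function.invFun e v)

section Simulation

variable [Nonempty σ] (M : PassMachine σ) (e : σ ↪ Fin w) (ν : Fin n → Bool)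

theorem run_toKOBDD_succ {p q : ℕ} (hp : p < k) (hq : q < n) {s : σ}
    (hs : (M.toKOBDD n k e).run ν (p * n + q) = e s) :
    (M.toKOBDD n k e).run ν (p * n + q + 1) =
      e (M.read p q (if q = 0 then M.enter p s else s) (bitOf ν q)) := by
  have hlt : p * n + q < k * n := by nlinarith
  have hdiv : (p * n + q) / n = p := by
    rw [mul_comm, Nat.mul_add_div (by omega), Nat.div_eq_of_lt hq, add_zero]
  have hmod : (p * n + q) % n = q := by
    rw [mul_comm, Nat.mul_add_mod, Nat.mod_eq_of_lt hq]
  rw [KOBDD.run, dif_pos hlt, hs]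
  simp only [toKOBDD, Function.leftInverse_invFun e.injective s, varIdx, hdiv, hmod, bitOf,
    dif_pos hq, Equiv.refl_apply]

theorem run_toKOBDD_pass {p : ℕ} (hp : p < k) {s : σ}
    (hs : (M.toKOBDD n k e).run ν (p * n) = e s) (q : ℕ) (hq : q < n) :
    (M.toKOBDD n k e).run ν (p * n + q + 1) = e (M.scan ν p s (q + 1)) := by
  induction q with
  | zero => exact M.run_toKOBDD_succ e ν hp hq hs
  | succ q ih => exact M.run_toKOBDD_succ e ν hp hq (ih (by omega))

theorem run_toKOBDD_mul (hn : 0 < n) (p : ℕ) (hp : p ≤ k) :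
    (M.toKOBDD n k e).run ν (p * n) = e (M.afterPasses ν p) := by
  induction p with
  | zero => rw [zero_mul]; rfl
  | succ p ih =>
    have hpass := M.run_toKOBDD_pass e ν hp (ih (by omega)) (n - 1) (by omega)
    rwa [add_assoc, Nat.sub_add_cancel hn, ← Nat.succ_mul] at hpass

end Simulation

theorem exists_kobdd_computes [Fintype σ] (M : PassMachine σ) (hn : 0 < n)
    (hw : Fintype.card σ ≤ w) {f : (Fin n → Bool) → Bool}
    (hf : ∀ ν, f ν = true ↔ M.accept (M.afterPasses ν k)) :
    ∃ P : KOBDD n k w, P.order = Equiv.refl (Fin n) ∧ P.Computes f := by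
  have : Nonempty σ := ⟨M.init⟩
  obtain ⟨e⟩ : Nonempty (σ ↪ Fin w) :=
    Function.Embedding.nonempty_of_card_le (by rwa [Fintype.card_fin])
  refine ⟨M.toKOBDD n k e, rfl, fun ν ↦ ?_⟩
  rw [M.run_toKOBDD_mul e ν hn k le_rfl, hf]
  simp only [toKOBDD, Function.leftInverse_invFun e.injective _]

end PassMachine

theorem list_eq_of_forall_lt_getElem?_eq {α : Type*} {l₁ l₂ : List α} {r : ℕ}
    (hlen : l₁.length + l₂.length ≤ 2 * r) (h : ∀ i < r, l₁[i]? = l₂[i]?) : l₁ = l₂ := by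
  have hlen_eq : l₁.length = l₂.length := by
    by_contra hne
    have hnone : l₁[min l₁.length l₂.length]? = none ↔ l₂[min l₁.length l₂.length]? = none := by
      rw [h _ (by omega)]
    rw [List.getElem?_eq_none_iff, List.getElem?_eq_none_iff] at hnone
    omega
  refine List.ext_getElem? fun i ↦ ?_
  by_cases hi : i < r
  · exact h i hi
  · rw [List.getElem?_eq_none (by omega), List.getElem?_eq_none (by omega)]

theorem elim_getElem?_concat {α β : Type*} (l : List α) (a : α) (j : ℕ) (m : β) (f : α → β) :
    (l ++ [a])[j]?.elim m f = if j = l.length then f a else l[j]?.elim m f := by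
  grind

section eqsPart

variable {n : ℕ} (ν : Fin n → Bool)

theorem eqsPart_two_mul_succ (mark : Bool) (i : ℕ) :
    eqsPart (2 * (i + 1)) mark ν = eqsPart (2 * i) mark ν ++
      if bitOf ν (2 * i) = mark then [bitOf ν (2 * i + 1)] else [] := by
  have half (i : ℕ) : 2 * i / 2 = i := by omega
  by_cases h : bitOf ν (2 * i) = mark <;>
    simp [eqsPart, half, List.range_succ, h]

theorem length_eqsPart_add_length_eqsPart (d : ℕ) :
    (eqsPart d false ν).length + (eqsPart d true ν).length = d / 2 := by
  have h := List.length_eq_length_filter_add (l := List.range (d / 2))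
    (fun i ↦ bitOf ν (2 * i) == false)
  simpa [eqsPart] using h.symm

theorem EQS_eq_true_iff_forall_lt {d r : ℕ} (hdr : d ≤ 4 * r) :
    EQS n d ν = true ↔ ∀ j < r, (eqsPart d false ν)[j]? = (eqsPart d true ν)[j]? := by
  rw [EQS, decide_eq_true_iff]
  refine ⟨fun h j _ ↦ by rw [h], fun h ↦ list_eq_of_forall_lt_getElem?_eq ?_ h⟩
  rw [length_eqsPart_add_length_eqsPart]
  omega

end eqsPart

/-- The part of the state in which the comparisons are made: `none` records that one has failed,
`some a` that none has failed so far and `a` waits to be compared. -/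
abbrev EqsRegister := Option (Option Bool)

namespace EqsRegister

/-- Begins a new comparison; a letter still waiting has not found its partner. -/
def settle (m : EqsRegister) : EqsRegister := if m = some none then some none else none

/-- Puts a letter of `α` on hold. -/
def store (b : Bool) (m : EqsRegister) : EqsRegister := m.map fun _ ↦ some b

/-- Compares a letter of `β` with the one on hold. -/
def cancel (b : Bool) (m : EqsRegister) : EqsRegister :=
  if m = some (some b) then some none else none

/-- The action on the register of the letter that pass `p` is looking for. -/
def update (p : ℕ) : Bool → EqsRegister → EqsRegister := if p % 2 = 0 then store else cancel

theorem cancel_store_settle_eq_iff (m : EqsRegister) (a b : Option Bool) :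
    (b.elim (a.elim (settle m) (store · (settle m)))
      (cancel · (a.elim (settle m) (store · (settle m))))) = some none ↔
      m = some none ∧ a = b := by
  revert m a b
  decide

end EqsRegister

/-- In a state `(m, t, c)`, `m` is the register, `t` the last marker bit, and `c` counts down to the
letter that the pass is looking for: that letter is the `c`-th of those with the right marker still
to come, and `c = 0` once it has been passed. -/
abbrev EqsState (r : ℕ) := EqsRegister × Bool × Fin (r + 1)

namespace EqsState

variable {r : ℕ}

/-- The state in which pass `p` begins. The minimum only serves to stay below `r + 1`. -/
def enter (p : ℕ) : EqsState r → EqsState r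
  | (m, t, _) => (if p % 2 = 0 then EqsRegister.settle m else m, t, ⟨min (p / 2 + 1) r, by omega⟩)

/-- The effect of a value bit `b` in pass `p`. Even passes look for a letter of `α`, whose marker is
`false`, odd ones for a letter of `β`. -/
def readValue (p : ℕ) (b : Bool) : EqsState r → EqsState r
  | (m, t, c) =>
    if t = decide (p % 2 = 1) then
      (if c.val = 1 then EqsRegister.update p b m else m, t, ⟨c.val - 1, by omega⟩)
    else (m, t, c)

/-- The effect of the bit `b` at the 0-based position `q` in pass `p`. -/
def read (d p q : ℕ) (s : EqsState r) (b : Bool) : EqsState r :=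
  if q / 2 < d / 2 then
    if q % 2 = 0 then (s.1, b, s.2.2) else readValue p b s
  else s

end EqsState

/-- The automaton that decides `EQS_d` in `2 * r` passes: passes `2 * j` and `2 * j + 1` together
compare the letters of `α` and `β` at position `j`. -/
def eqsMachine (d r : ℕ) : PassMachine (EqsState r) where
  init := (some none, false, 0)
  enter := EqsState.enter
  read := EqsState.read d
  accept s := s.1 = some none

namespace eqsMachine

variable {n d r p : ℕ} (ν : Fin n → Bool) (s : EqsState r)

theorem scan_succ_pair {i : ℕ} (hi : i < d / 2) :
    (eqsMachine d r).scan ν p s (2 * (i + 1)) =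
      EqsState.readValue p (bitOf ν (2 * i + 1))
        (((eqsMachine d r).scan ν p s (2 * i)).1, bitOf ν (2 * i),
          ((eqsMachine d r).scan ν p s (2 * i)).2.2) := by
  have hread (s : EqsState r) (b b' : Bool) :
      EqsState.read d p (2 * i + 1) (EqsState.read d p (2 * i) s b) b' =
        EqsState.readValue p b' (s.1, b, s.2.2) := by
    rw [EqsState.read, if_pos (by omega), if_neg (by omega), EqsState.read, if_pos (by omega),
      if_pos (by omega)]
  exact hread _ _ _

theorem scan_two_mul (hp : p / 2 < r) (i : ℕ) (hi : i ≤ d / 2) :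
    let L := eqsPart (2 * i) (decide (p % 2 = 1)) ν
    let m := (EqsState.enter p s).1
    let s' := (eqsMachine d r).scan ν p s (2 * i)
    s'.1 = L[p / 2]?.elim m (EqsRegister.update p · m) ∧ s'.2.2.val = p / 2 + 1 - L.length := by
  induction i with
  | zero => exact ⟨rfl, min_eq_left hp⟩
  | succ i ih =>
    obtain ⟨hreg, hcount⟩ := ih (by omega)
    intro L m s'
    rw [show s' = _ from scan_succ_pair ν s hi, show L = _ from eqsPart_two_mul_succ ν _ i]
    by_cases hmark : bitOf ν (2 * i) = decide (p % 2 = 1)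
    · simp only [EqsState.readValue, if_pos hmark, elim_getElem?_concat, List.length_append,
        List.length_singleton]
      refine ⟨?_, by omega⟩
      by_cases hlen : p / 2 = (eqsPart (2 * i) (decide (p % 2 = 1)) ν).length
      · rw [if_pos (by omega), if_pos hlen, hreg, List.getElem?_eq_none hlen.ge, Option.elim_none]
      · rw [if_neg (by omega), if_neg hlen, hreg]
    · simpa only [EqsState.readValue, if_neg hmark, List.append_nil] using ⟨hreg, hcount⟩

theorem scan_eq_scan_of_le {q : ℕ} (hq : 2 * (d / 2) ≤ q) :
    (eqsMachine d r).scan ν p s q = (eqsMachine d r).scan ν p s (2 * (d / 2)) := by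
  induction q, hq using Nat.le_induction with
  | base => rfl
  | succ q hq ih => exact (if_neg (by omega)).trans ih

theorem register_scan (hdn : d ≤ n) (hp : p / 2 < r) :
    ((eqsMachine d r).scan ν p s n).1 =
      (eqsPart d (decide (p % 2 = 1)) ν)[p / 2]?.elim (EqsState.enter p s).1
        (EqsRegister.update p · (EqsState.enter p s).1) := by
  have hhalf : eqsPart (2 * (d / 2)) (decide (p % 2 = 1)) ν = eqsPart d (decide (p % 2 = 1)) ν := by
    simp [eqsPart]
  rw [scan_eq_scan_of_le ν s (by omega), (scan_two_mul ν s hp _ le_rfl).1, hhalf]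

theorem register_scan_two_mul (hdn : d ≤ n) {j : ℕ} (hj : j < r) :
    ((eqsMachine d r).scan ν (2 * j) s n).1 =
      (eqsPart d false ν)[j]?.elim (EqsRegister.settle s.1)
        (EqsRegister.store · (EqsRegister.settle s.1)) := by
  simpa [EqsState.enter, EqsRegister.update] using
    register_scan (p := 2 * j) ν s hdn (by omega)

theorem register_scan_two_mul_add_one (hdn : d ≤ n) {j : ℕ} (hj : j < r) :
    ((eqsMachine d r).scan ν (2 * j + 1) s n).1 =
      (eqsPart d true ν)[j]?.elim s.1 (EqsRegister.cancel · s.1) := by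
  have hhalf : (2 * j + 1) / 2 = j := by omega
  simpa [EqsState.enter, EqsRegister.update, hhalf] using
    register_scan (p := 2 * j + 1) ν s hdn (by omega)

theorem accept_afterPasses_two_mul_succ (hdn : d ≤ n) {j : ℕ} (hj : j < r) :
    (eqsMachine d r).accept ((eqsMachine d r).afterPasses ν (2 * (j + 1))) ↔
      (eqsMachine d r).accept ((eqsMachine d r).afterPasses ν (2 * j)) ∧
        (eqsPart d false ν)[j]? = (eqsPart d true ν)[j]? := by
  let s := (eqsMachine d r).afterPasses ν (2 * j)
  change ((eqsMachine d r).scan ν (2 * j + 1) ((eqsMachine d r).scan ν (2 * j) s n) n).1 =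
    some none ↔ s.1 = some none ∧ _
  rw [register_scan_two_mul_add_one ν _ hdn hj, register_scan_two_mul ν s hdn hj,
    EqsRegister.cancel_store_settle_eq_iff]

theorem accept_afterPasses_two_mul_iff (hdn : d ≤ n) (j : ℕ) (hj : j ≤ r) :
    (eqsMachine d r).accept ((eqsMachine d r).afterPasses ν (2 * j)) ↔
      ∀ i < j, (eqsPart d false ν)[i]? = (eqsPart d true ν)[i]? := by
  induction j with
  | zero => exact iff_of_true rfl (by simp)
  | succ j ih =>
    rw [accept_afterPasses_two_mul_succ ν hdn hj, ih (by omega), Nat.forall_lt_succ_right]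

end eqsMachine

theorem eqs_upper_bound_general (n d r w : ℕ) (hn : 0 < n) (hdn : d ≤ n) (hdr : d ≤ 4 * r)
    (hw : 8 * (r + 1) ≤ w) :
    ∃ P : KOBDD n (2 * r) w, P.order = Equiv.refl (Fin n) ∧ P.Computes (EQS n d) := by
  have hcard : Fintype.card (EqsState r) = 8 * (r + 1) := by
    simp only [EqsState, EqsRegister, Fintype.card_prod, Fintype.card_option, Fintype.card_bool,
      Fintype.card_fin]
    ring
  refine (eqsMachine d r).exists_kobdd_computes hn (hcard.trans_le hw) fun ν ↦ ?_
  rw [EQS_eq_true_iff_forall_lt ν hdr, eqsMachine.accept_afterPasses_two_mul_iff ν hdn r le_rfl]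

/-- **Upper bound for shuffled equality.** For `k` a multiple of `4` with
`4 ≤ k ≤ min n 2^(n/4)`, the function `EQS_k : {0,1}^n → {0,1}` is computed by a
deterministic `k`-OBDD of width at most `k² + 6k + 2` whose order is the identity. -/
theorem eqs_upper_bound (n k : ℕ) (hk4 : k % 4 = 0) (hk : 4 ≤ k)
    (hkn : k ≤ n) (hk2 : k ≤ 2 ^ (n / 4)) :
    ∃ P : KOBDD n k (k ^ 2 + 6 * k + 2),
      P.order = Equiv.refl (Fin n) ∧ P.Computes (EQS n k) := by
  obtain ⟨r, rfl⟩ : ∃ r, k = 2 * r := ⟨k / 2, by omega⟩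
  exact eqs_upper_bound_general n (2 * r) r _ (by omega) hkn (by omega) (by nlinarith)
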